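/- The map R ↦ g, defined by g_{μν}(x) := ∑_a e^a_μ(x) e^a_ν(x) where e^a_μ(x) := δ^a_μ + ∫₀¹ t(1−t) ∑_{b,ρ} x^b x^ρ R^a_{bρμ}(tx) dt, is a bijection from the set of smooth maps R : ℝⁿ → (Fin n → Fin n → Matrix (Fin n) (Fin n) ℝ), written R^a_{bμν}(x), satisfying R^a_{bμν} = −R^a_{bνμ}, R^a_{bμν} = −R^b_{aμν}, the 1st Bianchi identity for curvature (∑_b (R^a_{bμν} e^b_ρ + R^a_{bνρ} e^b_μ + R^a_{bρμ} e^b_ν) = 0 with e given by the displayed formula) and the 2nd Bianchi identity for curvature (∂_μ R^a_{bνρ} + ∂_ν R^a_{bρμ} + ∂_ρ R^a_{bμν} + ∑_c (ω^a_{cμ} R^c_{bνρ} − R^a_{cνρ} ω^c_{bμ} + ω^a_{cν} R^c_{bρμ} − R^a_{cρμ} ω^c_{bν} + ω^a_{cρ} R^c_{bμν} − R^a_{cμν} ω^c_{bρ}) = 0, where ω^a_{bμ}(x) := ∫₀¹ t ∑_ν x^ν R^a_{bνμ}(tx) dt), and for which the associated e(x) is invertible for every x, onto the set of metrics in normal coordinates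 arising this way, i.e. smooth symmetric positive-definite g : ℝⁿ → Matrix (Fin n) (Fin n) ℝ with ∑_μ x^μ g_{μν}(x) = x^ν that equal ∑_a e^a_μ e^a_ν for a vielbein e satisfying conditions (one), (two) and (three). -/

import Mathlib

/-- The partial derivative `∂_μ f` of a real-valued function on `ℝⁿ`. -/
noncomputable def pd {n : ℕ} (μ : Fin n) (f : (Fin n → ℝ) → ℝ) (x : Fin n → ℝ) : ℝ :=
  fderiv ℝ f x (Pi.single μ 1)

/-- The spin-connection associated to a curvature `R` by the radial integral formula
`ω^a_{bμ}(x) = ∫₀¹ t ∑_ν x^ν R^a_{bνμ}(tx) dt`; `ωOf R x μ a b = ω^a_{bμ}(x)`. -/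
noncomputable def ωOf {n : ℕ}
    (R : (Fin n → ℝ) → Fin n → Fin n → Matrix (Fin n) (Fin n) ℝ) :
    (Fin n → ℝ) → Fin n → Matrix (Fin n) (Fin n) ℝ :=
  fun x μ => Matrix.of fun a b =>
    ∫ t in (0:ℝ)..1, t • ∑ ν, x ν * R (t • x) ν μ a b

/-- The vielbein associated to a curvature `R` by the radial integral formula
`e^a_μ(x) = δ^a_μ + ∫₀¹ t(1−t) ∑_{b,ν} x^b x^ν R^a_{bνμ}(tx) dt`;
`eOf R x a μ = e^a_μ(x)`. -/
noncomputable def eOf {n : ℕ}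
    (R : (Fin n → ℝ) → Fin n → Fin n → Matrix (Fin n) (Fin n) ℝ) :
    (Fin n → ℝ) → Matrix (Fin n) (Fin n) ℝ :=
  fun x => Matrix.of fun a μ =>
    (1 : Matrix (Fin n) (Fin n) ℝ) a μ
      + ∫ t in (0:ℝ)..1, (t * (1 - t)) • ∑ b, ∑ ν, x b * x ν * R (t • x) ν μ a b

/-- The metric associated to a curvature `R`: `g_{μν} = ∑_a e^a_μ e^a_ν` with `e = eOf R`. -/
noncomputable def metOf {n : ℕ}
    (R : (Fin n → ℝ) → Fin n → Fin n → Matrix (Fin n) (Fin n) ℝ) :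
    (Fin n → ℝ) → Matrix (Fin n) (Fin n) ℝ :=
  fun x => Matrix.of fun μ ν => ∑ a, eOf R x a μ * eOf R x a ν

/-- The set of smooth curvatures `R` (written `R x μ ν a b = R^a_{bμν}(x)`), antisymmetric
in the 2-form indices and in the matrix indices, satisfying the 1st and 2nd Bianchi
identities for curvature (with `ω = ωOf R` and `e = eOf R` given by the radial integral
formulas), and whose associated vielbein `eOf R` is invertible at every point. -/
def CurvatureSet (n : ℕ) :
    Set ((Fin n → ℝ) → Fin n → Fin n → Matrix (Fin n) (Fin n) ℝ) :=
  {R | (∀ μ ν a b, ContDiff ℝ (⊤ : ℕ∞) fun x => R x μ ν a b)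
    ∧ (∀ (x : Fin n → ℝ) μ ν a b, R x μ ν a b = - R x ν μ a b)
    ∧ (∀ (x : Fin n → ℝ) μ ν a b, R x μ ν a b = - R x μ ν b a)
    ∧ (∀ (x : Fin n → ℝ) μ ν ρ a,
      ∑ b, (R x μ ν a b * eOf R x b ρ + R x ν ρ a b * eOf R x b μ
        + R x ρ μ a b * eOf R x b ν) = 0)
    ∧ (∀ (x : Fin n → ℝ) μ ν ρ a b,
      pd μ (fun y => R y ν ρ a b) x + pd ν (fun y => R y ρ μ a b) x
        + pd ρ (fun y => R y μ ν a b) x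
        + ∑ c, (ωOf R x μ a c * R x ν ρ c b - R x ν ρ a c * ωOf R x μ c b
          + ωOf R x ν a c * R x ρ μ c b - R x ρ μ a c * ωOf R x ν c b
          + ωOf R x ρ a c * R x μ ν c b - R x μ ν a c * ωOf R x ρ c b) = 0)
    ∧ (∀ x : Fin n → ℝ, IsUnit (eOf R x))}

/-- The set of smooth symmetric positive-definite metrics in normal coordinates
(`g x μ ν = g_{μν}(x)`, `∑_μ x^μ g_{μν}(x) = x^ν`) that arise as `g_{μν} = ∑_a e^a_μ e^a_ν`
for some smooth pointwise-invertible vielbein `e` satisfying conditions (one), (two) and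
(three), with inverse matrix entries `e_a^μ(x) = (e x)⁻¹ μ a`. -/
def NormalMetricSet (n : ℕ) : Set ((Fin n → ℝ) → Matrix (Fin n) (Fin n) ℝ) :=
  {g | (∀ μ ν, ContDiff ℝ (⊤ : ℕ∞) fun x => g x μ ν)
    ∧ (∀ (x : Fin n → ℝ) μ ν, g x μ ν = g x ν μ)
    ∧ (∀ x : Fin n → ℝ, (g x).PosDef)
    ∧ (∀ (x : Fin n → ℝ) ν, ∑ μ, x μ * g x μ ν = x ν)
    ∧ ∃ e : (Fin n → ℝ) → Matrix (Fin n) (Fin n) ℝ,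
      (∀ a μ, ContDiff ℝ (⊤ : ℕ∞) fun x => e x a μ)
      ∧ (∀ x : Fin n → ℝ, IsUnit (e x))
      ∧ (∀ (x : Fin n → ℝ) a, ∑ μ, x μ * e x a μ = x a)
      ∧ (∀ (x : Fin n → ℝ) μ, ∑ a, x a * e x a μ = x μ)
      ∧ (∀ (x : Fin n → ℝ) a b,
        ∑ μ, (e x)⁻¹ μ a * ((∑ ν, x ν * pd ν (fun y => e y b μ) x) + e x b μ)
          = ∑ μ, (e x)⁻¹ μ b * ((∑ ν, x ν * pd ν (fun y => e y a μ) x) + e x a μ))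
      ∧ (∀ (x : Fin n → ℝ) μ ν, g x μ ν = ∑ a, e x a μ * e x a ν)}

open scoped ContDiff Matrix

theorem param_hasFDerivAt {n : ℕ} {F : Type} [NormedAddCommGroup F] [NormedSpace ℝ F]
    [CompleteSpace F] (k : ℕ) (h : (Fin n → ℝ) → F) (hh : ContDiff ℝ 1 h) (x : Fin n → ℝ) :
    HasFDerivAt (fun x => ∫ t in (0:ℝ)..1, t ^ k • h (t • x))
      (∫ t in (0:ℝ)..1, t ^ (k+1) • fderiv ℝ h (t • x)) x := by
  have hc : Continuous (fderiv ℝ h) := hh.continuous_fderiv (by norm_num)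
  have hh' : Continuous h := hh.continuous
  obtain ⟨C, hC⟩ := (isCompact_closedBall (0 : Fin n → ℝ) (‖x‖ + 1)).exists_bound_of_continuousOn
    hc.continuousOn
  refine intervalIntegral.hasFDerivAt_integral_of_dominated_of_fderiv_le
    (F := fun x t => t ^ k • h (t • x))
    (F' := fun x t => t ^ (k+1) • fderiv ℝ h (t • x)) (bound := fun _ => C)
    (s := Metric.ball x 1) (Metric.ball_mem_nhds x one_pos) ?_ ?_ ?_ ?_ ?_ ?_
  · refine Filter.Eventually.of_forall fun y => ?_
    exact Continuous.aestronglyMeasurable (by fun_prop)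
  · exact Continuous.intervalIntegrable (by fun_prop) _ _
  · exact Continuous.aestronglyMeasurable (by fun_prop)
  · refine Filter.Eventually.of_forall fun t ht y hy => ?_
    rw [Set.uIoc_of_le zero_le_one] at ht
    have h1 : ‖t • y‖ ≤ ‖x‖ + 1 := by
      rw [norm_smul, Real.norm_of_nonneg ht.1.le]
      have : ‖y‖ ≤ ‖x‖ + 1 := by
        have := mem_ball_iff_norm.1 hy
        have h3 := norm_le_norm_add_norm_sub x y
        rw [norm_sub_rev] at h3
        linarith
      have := norm_nonneg y
      nlinarith [ht.1, ht.2]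
    have h2 := hC (t • y) (by simpa using h1)
    rw [norm_smul, Real.norm_of_nonneg (pow_nonneg ht.1.le _)]
    have h4 : t ^ (k+1) ≤ 1 := pow_le_one₀ ht.1.le ht.2
    have := norm_nonneg (fderiv ℝ h (t • y))
    have := pow_nonneg ht.1.le (k+1)
    nlinarith
  · exact intervalIntegrable_const
  · refine Filter.Eventually.of_forall fun t ht y hy => ?_
    have h1 : HasFDerivAt (fun y : Fin n → ℝ => t • y)
      (t • ContinuousLinearMap.id ℝ (Fin n → ℝ)) y := (hasFDerivAt_id y).const_smul t
    have h2 := ((hh.differentiable (by norm_num)) (t • y)).hasFDerivAt.comp y h1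
    have h3 := h2.const_smul (t ^ k)
    refine h3.congr_fderiv ?_
    ext v
    simp [pow_succ, smul_smul]

theorem param_contDiff_nat {n : ℕ} (m : ℕ) : ∀ {F : Type} [NormedAddCommGroup F] [NormedSpace ℝ F]
    [CompleteSpace F] (k : ℕ) (h : (Fin n → ℝ) → F), ContDiff ℝ ∞ h →
    ContDiff ℝ m (fun x => ∫ t in (0:ℝ)..1, t ^ k • h (t • x)) := by
  induction m with
  | zero =>
    intro F _ _ _ k h hh
    have : ContDiff ℝ 1 h := hh.of_le (by exact_mod_cast le_top)
    rw [Nat.cast_zero, contDiff_zero]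
    exact continuous_iff_continuousAt.2 fun x => (param_hasFDerivAt k h this x).continuousAt
  | succ m ih =>
    intro F _ _ _ k h hh
    have h1 : ContDiff ℝ 1 h := hh.of_le (by exact_mod_cast le_top)
    rw [Nat.cast_add, Nat.cast_one, contDiff_succ_iff_fderiv]
    refine ⟨fun x => (param_hasFDerivAt k h h1 x).differentiableAt, by simp, ?_⟩
    have : fderiv ℝ (fun x => ∫ t in (0:ℝ)..1, t ^ k • h (t • x)) =
        fun x => (∫ t in (0:ℝ)..1, t ^ (k+1) • fderiv ℝ h (t • x)) := by
      funext x
      exact (param_hasFDerivAt k h h1 x).fderiv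
    rw [this]
    exact ih (k+1) _ (hh.fderiv_right (by simp))

/-- radial average -/
noncomputable def rI {n : ℕ} (h : (Fin n → ℝ) → ℝ) : (Fin n → ℝ) → ℝ :=
  fun x => ∫ t in (0:ℝ)..1, h (t • x)

/-- Euler operator -/
noncomputable def Eu {n : ℕ} (f : (Fin n → ℝ) → ℝ) (x : Fin n → ℝ) : ℝ := ∑ ν, x ν * pd ν f x

theorem Eu_eq {n : ℕ} (f : (Fin n → ℝ) → ℝ) (x : Fin n → ℝ) : Eu f x = fderiv ℝ f x x := by
  unfold Eu pd
  conv_rhs => rw [pi_eq_sum_univ' x, map_sum]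
  refine Finset.sum_congr rfl fun ν _ => ?_
  rw [← pi_eq_sum_univ' x, map_smul, smul_eq_mul]

theorem rI_contDiff {n : ℕ} {h : (Fin n → ℝ) → ℝ} (hh : ContDiff ℝ ∞ h) :
    ContDiff ℝ ∞ (rI h) := by
  rw [contDiff_infty]
  intro m
  have := param_contDiff_nat m 0 h hh
  simp only [pow_zero, one_smul] at this
  exact this

theorem radial_hasDerivAt {n : ℕ} {f : (Fin n → ℝ) → ℝ} (hf : Differentiable ℝ f)
    (x : Fin n → ℝ) (s : ℝ) : HasDerivAt (fun s : ℝ => f (s • x)) (fderiv ℝ f (s • x) x) s := by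
  have h1 : HasDerivAt (fun s : ℝ => s • x) ((1:ℝ) • x) s := (hasDerivAt_id s).smul_const x
  have := (hf (s • x)).hasFDerivAt.comp_hasDerivAt s h1
  rw [one_smul] at this
  exact this

theorem Eu_rI {n : ℕ} {h : (Fin n → ℝ) → ℝ} (hh : ContDiff ℝ ∞ h) (x : Fin n → ℝ) :
    Eu (rI h) x + rI h x = h x := by
  have h1 : ∀ s : ℝ, s * rI h (s • x) = ∫ u in (0:ℝ)..s, h (u • x) := by
    intro s
    have := intervalIntegral.mul_integral_comp_mul_left (a := 0) (b := 1) (f := fun u => h (u • x)) s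
    simp only [mul_zero, mul_one] at this
    rw [← this, rI]
    simp only [smul_smul, mul_comm]
  have hd : Differentiable ℝ (rI h) := (rI_contDiff hh).differentiable (by simp)
  have h2 := (hasDerivAt_id (1:ℝ)).mul (radial_hasDerivAt hd x 1)
  have hc : Continuous h := hh.continuous
  have h3 : HasDerivAt (fun s => ∫ u in (0:ℝ)..s, h (u • x)) (h ((1:ℝ) • x)) 1 :=
    Continuous.deriv_integral (fun u : ℝ => h (u • x)) (by fun_prop) 0 1 ▸
      (intervalIntegral.integral_hasDerivAt_right
        (Continuous.intervalIntegrable (by fun_prop) _ _)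
        (Continuous.stronglyMeasurableAtFilter (by fun_prop) _ _)
        (Continuous.continuousAt (by fun_prop))).differentiableAt.hasDerivAt
  have h4 := h2.unique (h3.congr_of_eventuallyEq (Filter.Eventually.of_forall fun s => by
    simpa using h1 s))
  simp only [one_smul, id] at h4
  rw [Eu_eq]
  linarith

theorem Eu_zero {n : ℕ} (k : ℕ) {f : (Fin n → ℝ) → ℝ} (hf : Differentiable ℝ f)
    (h : ∀ x, Eu f x + (k+1) * f x = 0) (x : Fin n → ℝ) : f x = 0 := by
  have hd : ∀ s : ℝ, HasDerivAt (fun s : ℝ => s ^ (k+1) * f (s • x)) 0 s := by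
    intro s
    have h2 := (hasDerivAt_pow (k+1) s).mul (radial_hasDerivAt hf x s)
    refine h2.congr_deriv ?_
    have h3 := h (s • x)
    rw [Eu_eq, map_smul, smul_eq_mul] at h3
    push_cast
    linear_combination (s^k) * h3
  have := is_const_of_deriv_eq_zero (fun s => (hd s).differentiableAt) (fun s => (hd s).deriv) 1 0
  simpa using this

theorem Eu_const {n : ℕ} {f : (Fin n → ℝ) → ℝ} (hf : Differentiable ℝ f)
    (h : ∀ x, Eu f x = 0) (x : Fin n → ℝ) : f x = f 0 := by
  have hd : ∀ s : ℝ, HasDerivAt (fun s : ℝ => f (s • x)) (fderiv ℝ f (s • x) x) s :=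
    fun s => radial_hasDerivAt hf x s
  have hd0 : ∀ s : ℝ, s * fderiv ℝ f (s • x) x = 0 := by
    intro s
    have := h (s • x)
    rwa [Eu_eq, map_smul, smul_eq_mul] at this
  have hz : ∀ s : ℝ, s ≠ 0 → fderiv ℝ f (s • x) x = 0 := fun s hs =>
    (mul_eq_zero.1 (hd0 s)).resolve_left hs
  have hmvt := exists_hasDerivAt_eq_slope (fun s : ℝ => f (s • x)) (fun s => fderiv ℝ f (s • x) x)
    zero_lt_one (fun s _ => (hd s).continuousAt.continuousWithinAt) (fun s _ => hd s)
  obtain ⟨c, hc, hc2⟩ := hmvt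
  rw [hz c hc.1.ne'] at hc2
  simp at hc2
  linarith

/-- entrywise partial derivative -/
noncomputable def md {n : ℕ} (μ : Fin n) (M : (Fin n → ℝ) → Matrix (Fin n) (Fin n) ℝ)
    (x : Fin n → ℝ) : Matrix (Fin n) (Fin n) ℝ :=
  Matrix.of fun i j => pd μ (fun y => M y i j) x

/-- entrywise Euler operator -/
noncomputable def Er {n : ℕ} (M : (Fin n → ℝ) → Matrix (Fin n) (Fin n) ℝ)
    (x : Fin n → ℝ) : Matrix (Fin n) (Fin n) ℝ := ∑ ν, x ν • md ν M x

/-- entrywise smooth -/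
def SM {n : ℕ} (M : (Fin n → ℝ) → Matrix (Fin n) (Fin n) ℝ) : Prop :=
  ∀ i j, ContDiff ℝ ∞ fun x => M x i j

theorem pd_add {n : ℕ} (μ : Fin n) {f g : (Fin n → ℝ) → ℝ} (hf : ContDiff ℝ ∞ f)
    (hg : ContDiff ℝ ∞ g) (x : Fin n → ℝ) :
    pd μ (fun y => f y + g y) x = pd μ f x + pd μ g x := by
  unfold pd
  rw [fderiv_fun_add (hf.differentiable (by simp) x) (hg.differentiable (by simp) x)]
  rfl

theorem pd_sub {n : ℕ} (μ : Fin n) {f g : (Fin n → ℝ) → ℝ} (hf : ContDiff ℝ ∞ f)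
    (hg : ContDiff ℝ ∞ g) (x : Fin n → ℝ) :
    pd μ (fun y => f y - g y) x = pd μ f x - pd μ g x := by
  unfold pd
  rw [fderiv_fun_sub (hf.differentiable (by simp) x) (hg.differentiable (by simp) x)]
  rfl

theorem pd_mul {n : ℕ} (μ : Fin n) {f g : (Fin n → ℝ) → ℝ} (hf : ContDiff ℝ ∞ f)
    (hg : ContDiff ℝ ∞ g) (x : Fin n → ℝ) :
    pd μ (fun y => f y * g y) x = pd μ f x * g x + f x * pd μ g x := by
  unfold pd
  rw [fderiv_fun_mul (hf.differentiable (by simp) x) (hg.differentiable (by simp) x)]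
  simp
  ring

theorem pd_sum {n : ℕ} (μ : Fin n) {ι : Type} (s : Finset ι) {f : ι → (Fin n → ℝ) → ℝ}
    (hf : ∀ i, ContDiff ℝ ∞ (f i)) (x : Fin n → ℝ) :
    pd μ (fun y => ∑ i ∈ s, f i y) x = ∑ i ∈ s, pd μ (f i) x := by
  unfold pd
  rw [fderiv_fun_sum (fun i _ => (hf i).differentiable (by simp) x)]
  simp

theorem pd_coord {n : ℕ} (μ ν : Fin n) (x : Fin n → ℝ) :
    pd μ (fun y => y ν) x = (1 : Matrix (Fin n) (Fin n) ℝ) ν μ := by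
  unfold pd
  have : fderiv ℝ (fun y : Fin n → ℝ => y ν) x = ContinuousLinearMap.proj ν :=
    (ContinuousLinearMap.proj (R := ℝ) (φ := fun _ : Fin n => ℝ) ν).fderiv
  rw [this]
  simp [Pi.single_apply, Matrix.one_apply]

theorem pd_const {n : ℕ} (μ : Fin n) (c : ℝ) (x : Fin n → ℝ) : pd μ (fun _ => c) x = 0 := by
  simp [pd]

theorem pd_smooth {n : ℕ} (μ : Fin n) {f : (Fin n → ℝ) → ℝ} (hf : ContDiff ℝ ∞ f) :
    ContDiff ℝ ∞ (pd μ f) := by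
  unfold pd
  exact (hf.fderiv_right (m := ∞) (by simp)).clm_apply contDiff_const

theorem pd_comm {n : ℕ} (μ ν : Fin n) {f : (Fin n → ℝ) → ℝ} (hf : ContDiff ℝ ∞ f)
    (x : Fin n → ℝ) : pd μ (pd ν f) x = pd ν (pd μ f) x := by
  have hd : DifferentiableAt ℝ (fderiv ℝ f) x :=
    (hf.fderiv_right (m := ∞) (by simp)).differentiable (by simp) x
  have key : ∀ α β : Fin n, pd α (pd β f) x
      = fderiv ℝ (fderiv ℝ f) x (Pi.single α 1) (Pi.single β 1) := by
    intro α β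
    have h1 : pd β f = fun y => fderiv ℝ f y (Pi.single β 1) := rfl
    rw [h1, pd, fderiv_clm_apply hd (differentiableAt_const _)]
    simp
  rw [key, key]
  exact (hf.contDiffAt.isSymmSndFDerivAt (by
    rw [minSmoothness_of_isRCLikeNormedField]
    exact WithTop.coe_le_coe.2 (le_top (a := (2 : ℕ∞))))) _ _

section
variable {n : ℕ} {M N : (Fin n → ℝ) → Matrix (Fin n) (Fin n) ℝ}

theorem SM.add (hM : SM M) (hN : SM N) : SM (fun y => M y + N y) :=
  fun i j => (hM i j).add (hN i j)

theorem SM.sub (hM : SM M) (hN : SM N) : SM (fun y => M y - N y) :=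
  fun i j => (hM i j).sub (hN i j)

theorem SM.mul (hM : SM M) (hN : SM N) : SM (fun y => M y * N y) := by
  intro i j
  simp only [Matrix.mul_apply]
  exact ContDiff.sum fun k _ => (hM i k).mul (hN k j)

theorem SM.transpose (hM : SM M) : SM (fun y => (M y)ᵀ) := fun i j => hM j i

theorem SM.md (μ : Fin n) (hM : SM M) : SM (md μ M) := fun i j => pd_smooth μ (hM i j)

theorem SM.contract {G : Fin n → (Fin n → ℝ) → Matrix (Fin n) (Fin n) ℝ} (hG : ∀ μ, SM (G μ)) :
    SM (fun y => ∑ μ, y μ • G μ y) := by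
  intro i j
  simp only [Matrix.sum_apply, Matrix.smul_apply, smul_eq_mul]
  exact ContDiff.sum fun k _ => (contDiff_apply ℝ ℝ k).mul (hG k i j)

theorem SM.inv (hM : SM M) (hu : ∀ x, IsUnit (M x)) : SM (fun y => (M y)⁻¹) := by
  have hdet : ∀ {A : (Fin n → ℝ) → Matrix (Fin n) (Fin n) ℝ}, SM A →
      ContDiff ℝ ∞ fun x => (A x).det := by
    intro A hA
    simp only [Matrix.det_apply]
    refine ContDiff.sum fun σ _ => ?_
    exact ContDiff.const_smul _ (contDiff_prod fun i _ => hA _ _)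
  intro i j
  have : (fun x => (M x)⁻¹ i j) = fun x => ((M x).det)⁻¹ * ((M x).updateRow j (Pi.single i 1)).det := by
    funext x
    rw [Matrix.inv_def, Matrix.smul_apply, Matrix.adjugate_apply, Ring.inverse_eq_inv', smul_eq_mul]
  rw [this]
  refine ContDiff.mul ((hdet hM).inv fun x => ?_) (hdet ?_)
  · exact ((Matrix.isUnit_iff_isUnit_det _).1 (hu x)).ne_zero
  · intro k l
    by_cases h : k = j
    · subst h
      simp only [Matrix.updateRow_self]
      exact contDiff_const
    · simp only [Matrix.updateRow_ne h]
      exact hM k l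

theorem md_add (μ : Fin n) (hM : SM M) (hN : SM N) (x) :
    md μ (fun y => M y + N y) x = md μ M x + md μ N x := by
  ext i j
  exact pd_add μ (hM i j) (hN i j) x

theorem md_sub (μ : Fin n) (hM : SM M) (hN : SM N) (x) :
    md μ (fun y => M y - N y) x = md μ M x - md μ N x := by
  ext i j
  exact pd_sub μ (hM i j) (hN i j) x

theorem md_mul (μ : Fin n) (hM : SM M) (hN : SM N) (x) :
    md μ (fun y => M y * N y) x = md μ M x * N x + M x * md μ N x := by
  ext i j
  simp only [md, Matrix.mul_apply, Matrix.add_apply, Matrix.of_apply]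
  rw [pd_sum μ _ (fun k => (hM i k).mul (hN k j)), ← Finset.sum_add_distrib]
  exact Finset.sum_congr rfl fun k _ => pd_mul μ (hM i k) (hN k j) x

theorem md_comm (μ ν : Fin n) (hM : SM M) (x) : md μ (md ν M) x = md ν (md μ M) x := by
  ext i j
  exact pd_comm μ ν (hM i j) x

theorem md_transpose (μ : Fin n) (x) : md μ (fun y => (M y)ᵀ) x = (md μ M x)ᵀ := rfl

theorem md_contract (ν : Fin n) {G : Fin n → (Fin n → ℝ) → Matrix (Fin n) (Fin n) ℝ}
    (hG : ∀ μ, SM (G μ)) (x) :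
    md ν (fun y => ∑ μ, y μ • G μ y) x = G ν x + ∑ μ, x μ • md ν (G μ) x := by
  ext i j
  simp only [md, Matrix.sum_apply, Matrix.smul_apply, smul_eq_mul, Matrix.add_apply,
    Matrix.of_apply]
  rw [pd_sum ν _ (fun k => (contDiff_apply ℝ ℝ k).mul (hG k i j))]
  have : ∀ k, pd ν (fun y => y k * G k y i j) x
      = (1 : Matrix (Fin n) (Fin n) ℝ) k ν * G k x i j + x k * pd ν (fun y => G k y i j) x := by
    intro k
    rw [pd_mul ν (contDiff_apply ℝ ℝ k) (hG k i j), pd_coord]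
  simp only [this, Finset.sum_add_distrib]
  simp [Matrix.one_apply]

theorem Er_mul (hM : SM M) (hN : SM N) (x) :
    Er (fun y => M y * N y) x = Er M x * N x + M x * Er N x := by
  simp only [Er, md_mul _ hM hN, smul_add, Finset.sum_add_distrib, Finset.sum_mul, Finset.mul_sum,
    Matrix.smul_mul, Matrix.mul_smul]

theorem Er_transpose (x) : Er (fun y => (M y)ᵀ) x = (Er M x)ᵀ := by
  simp only [Er, md_transpose, Matrix.transpose_sum, Matrix.transpose_smul]

theorem Er_apply (x) (i j : Fin n) : Er M x i j = Eu (fun y => M y i j) x := by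
  simp [Er, Eu, md, Matrix.sum_apply]

end

/-- radial rigidity for covariantly closed 2-forms killed by the radial contraction -/
theorem radial_zero {n : ℕ} {F : Fin n → Fin n → (Fin n → ℝ) → Matrix (Fin n) (Fin n) ℝ}
    {w w' : Fin n → (Fin n → ℝ) → Matrix (Fin n) (Fin n) ℝ}
    (hF : ∀ μ ν, SM (F μ ν)) (ha : ∀ μ ν x, F μ ν x = - F ν μ x)
    (hw : ∀ x, ∑ μ, x μ • w μ x = 0) (hw' : ∀ x, ∑ μ, x μ • w' μ x = 0)
    (hx : ∀ ν x, ∑ μ, x μ • F μ ν x = 0)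
    (hD : ∀ μ ν ρ x, md μ (F ν ρ) x + md ν (F ρ μ) x + md ρ (F μ ν) x
      + (w μ x * F ν ρ x + w ν x * F ρ μ x + w ρ x * F μ ν x)
      - (F ν ρ x * w' μ x + F ρ μ x * w' ν x + F μ ν x * w' ρ x) = 0)
    (μ ν : Fin n) (x) : F μ ν x = 0 := by
  have hx' : ∀ ν x, ∑ μ, x μ • F ν μ x = 0 := by
    intro ν x
    have := hx ν x
    simp only [ha _ ν, smul_neg, Finset.sum_neg_distrib, neg_eq_zero] at this
    exact this
  have key : ∀ ν ρ x, Er (F ν ρ) x + (2:ℝ) • F ν ρ x = 0 := by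
    intro ν ρ x
    have h0 : ∑ μ, x μ • (md μ (F ν ρ) x + md ν (F ρ μ) x + md ρ (F μ ν) x
      + (w μ x * F ν ρ x + w ν x * F ρ μ x + w ρ x * F μ ν x)
      - (F ν ρ x * w' μ x + F ρ μ x * w' ν x + F μ ν x * w' ρ x)) = 0 := by
      simp only [hD, smul_zero, Finset.sum_const_zero]
    have z : ∀ α : Fin n, md α (fun _ => (0 : Matrix (Fin n) (Fin n) ℝ)) x = 0 := by
      intro α; ext i j; exact pd_const α 0 x
    have h1 := md_contract ν (fun μ => hF ρ μ) x
    simp only [hx', z] at h1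
    have h2 := md_contract ρ (fun μ => hF μ ν) x
    simp only [hx, z] at h2
    have e1 : ∑ μ, x μ • (w μ x * F ν ρ x) = 0 := by
      simp only [← Matrix.smul_mul, ← Finset.sum_mul, hw, zero_mul]
    have e2 : ∑ μ, x μ • (F ν ρ x * w' μ x) = 0 := by
      simp only [← Matrix.mul_smul, ← Finset.mul_sum, hw', mul_zero]
    have e3 : ∑ μ, x μ • (w ν x * F ρ μ x) = 0 := by
      simp only [← Matrix.mul_smul, ← Finset.mul_sum, hx', mul_zero]
    have e4 : ∑ μ, x μ • (w ρ x * F μ ν x) = 0 := by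
      simp only [← Matrix.mul_smul, ← Finset.mul_sum, hx, mul_zero]
    have e5 : ∑ μ, x μ • (F ρ μ x * w' ν x) = 0 := by
      simp only [← Matrix.smul_mul, ← Finset.sum_mul, hx', zero_mul]
    have e6 : ∑ μ, x μ • (F μ ν x * w' ρ x) = 0 := by
      simp only [← Matrix.smul_mul, ← Finset.sum_mul, hx, zero_mul]
    simp only [smul_add, smul_sub, Finset.sum_add_distrib, Finset.sum_sub_distrib, e1, e2, e3, e4,
      e5, e6, add_zero, sub_zero] at h0
    have h3 : ∑ μ, x μ • md ν (F ρ μ) x = F ν ρ x := by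
      rw [ha ν ρ]; exact (neg_eq_of_add_eq_zero_right h1.symm).symm
    have h4 : ∑ μ, x μ • md ρ (F μ ν) x = F ν ρ x := by
      rw [ha ν ρ]; exact (neg_eq_of_add_eq_zero_right h2.symm).symm
    rw [h3, h4] at h0
    rw [← h0, Er, two_smul, add_assoc]
  ext i j
  refine Eu_zero 1 ((hF μ ν i j).differentiable (by simp)) (fun x => ?_) x
  have := congrFun (congrFun (key μ ν x) i) j
  rw [Matrix.add_apply, Er_apply] at this
  norm_num
  simpa using this

/-- curvature of a connection -/
noncomputable def Om {n : ℕ} (w : Fin n → (Fin n → ℝ) → Matrix (Fin n) (Fin n) ℝ)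
    (μ ν : Fin n) (x : Fin n → ℝ) : Matrix (Fin n) (Fin n) ℝ :=
  md μ (w ν) x - md ν (w μ) x + w μ x * w ν x - w ν x * w μ x

/-- torsion of a family of column fields -/
noncomputable def To {n : ℕ} (w E : Fin n → (Fin n → ℝ) → Matrix (Fin n) (Fin n) ℝ)
    (μ ν : Fin n) (x : Fin n → ℝ) : Matrix (Fin n) (Fin n) ℝ :=
  md μ (E ν) x - md ν (E μ) x + w μ x * E ν x - w ν x * E μ x

section
variable {n : ℕ} {w E : Fin n → (Fin n → ℝ) → Matrix (Fin n) (Fin n) ℝ}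

theorem SM_To (hw : ∀ μ, SM (w μ)) (hE : ∀ μ, SM (E μ)) (μ ν) : SM (To w E μ ν) :=
  ((((hE ν).md μ).sub ((hE μ).md ν)).add ((hw μ).mul (hE ν))).sub ((hw ν).mul (hE μ))

theorem SM_Om (hw : ∀ μ, SM (w μ)) (μ ν) : SM (Om w μ ν) := SM_To hw hw μ ν

theorem md_To (hw : ∀ μ, SM (w μ)) (hE : ∀ μ, SM (E μ)) (ρ μ ν : Fin n) (x) :
    md ρ (To w E μ ν) x = md ρ (md μ (E ν)) x - md ρ (md ν (E μ)) x
      + (md ρ (w μ) x * E ν x + w μ x * md ρ (E ν) x)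
      - (md ρ (w ν) x * E μ x + w ν x * md ρ (E μ) x) := by
  have h1 := ((hE ν).md μ)
  have h2 := ((hE μ).md ν)
  have h3 := (hw μ).mul (hE ν)
  have h4 := (hw ν).mul (hE μ)
  unfold To
  rw [md_sub ρ ((h1.sub h2).add h3) h4, md_add ρ (h1.sub h2) h3, md_sub ρ h1 h2,
    md_mul ρ (hw μ) (hE ν), md_mul ρ (hw ν) (hE μ)]

theorem bianchi1 (hw : ∀ μ, SM (w μ)) (hE : ∀ μ, SM (E μ)) (μ ν ρ : Fin n) (x) :
    md μ (To w E ν ρ) x + md ν (To w E ρ μ) x + md ρ (To w E μ ν) x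
      + (w μ x * To w E ν ρ x + w ν x * To w E ρ μ x + w ρ x * To w E μ ν x)
      = Om w μ ν x * E ρ x + Om w ν ρ x * E μ x + Om w ρ μ x * E ν x := by
  rw [md_To hw hE, md_To hw hE, md_To hw hE, md_comm ν μ (hE ρ), md_comm ρ μ (hE ν),
    md_comm ρ ν (hE μ)]
  unfold To Om
  noncomm_ring

theorem bianchi2 (hw : ∀ μ, SM (w μ)) (μ ν ρ : Fin n) (x) :
    md μ (Om w ν ρ) x + md ν (Om w ρ μ) x + md ρ (Om w μ ν) x
      + (w μ x * Om w ν ρ x + w ν x * Om w ρ μ x + w ρ x * Om w μ ν x)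
      - (Om w ν ρ x * w μ x + Om w ρ μ x * w ν x + Om w μ ν x * w ρ x) = 0 := by
  have h := bianchi1 hw hw μ ν ρ x
  have e : ∀ μ ν, To w w μ ν = Om w μ ν := fun _ _ => rfl
  simp only [e] at h
  rw [h]
  abel

end

/-- position column -/
def Xc {n : ℕ} (x : Fin n → ℝ) : Matrix (Fin n) (Fin n) ℝ := Matrix.of fun b _ => x b

/-- columns of the vielbein -/
def ecol {n : ℕ} (e : (Fin n → ℝ) → Matrix (Fin n) (Fin n) ℝ) (ν : Fin n) (x : Fin n → ℝ) :
    Matrix (Fin n) (Fin n) ℝ := Matrix.of fun a _ => e x a ν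

/-- connection applied to position -/
def Bm {n : ℕ} (w : Fin n → (Fin n → ℝ) → Matrix (Fin n) (Fin n) ℝ) (x : Fin n → ℝ) :
    Matrix (Fin n) (Fin n) ℝ := Matrix.of fun b μ => ∑ a, w μ x b a * x a

theorem antisym_sum {n : ℕ} (A : Matrix (Fin n) (Fin n) ℝ) (hA : ∀ a b, A a b = - A b a)
    (x : Fin n → ℝ) : ∑ a, x a * ∑ b, x b * A a b = 0 := by
  have h1 : ∑ a, x a * ∑ b, x b * A a b = - ∑ a, x a * ∑ b, x b * A a b := by
    conv_lhs => simp only [Finset.mul_sum]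
    rw [Finset.sum_comm, ← Finset.sum_neg_distrib]
    refine Finset.sum_congr rfl fun a _ => ?_
    rw [Finset.mul_sum, ← Finset.sum_neg_distrib]
    refine Finset.sum_congr rfl fun b _ => ?_
    rw [hA b a]; ring
  linarith

section
variable {n : ℕ}

theorem Eu_add {f g : (Fin n → ℝ) → ℝ} (hf : ContDiff ℝ ∞ f) (hg : ContDiff ℝ ∞ g) (x) :
    Eu (fun y => f y + g y) x = Eu f x + Eu g x := by
  simp only [Eu, pd_add _ hf hg, mul_add, Finset.sum_add_distrib]

theorem Eu_sub {f g : (Fin n → ℝ) → ℝ} (hf : ContDiff ℝ ∞ f) (hg : ContDiff ℝ ∞ g) (x) :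
    Eu (fun y => f y - g y) x = Eu f x - Eu g x := by
  simp only [Eu, pd_sub _ hf hg, mul_sub, Finset.sum_sub_distrib]

theorem Eu_cst (c : ℝ) (x : Fin n → ℝ) : Eu (fun _ => c) x = 0 := by
  simp [Eu, pd_const]

theorem Eu_coord (b : Fin n) (x : Fin n → ℝ) : Eu (fun y => y b) x = x b := by
  simp [Eu, pd_coord, Matrix.one_apply]

theorem Eu_mul {f g : (Fin n → ℝ) → ℝ} (hf : ContDiff ℝ ∞ f) (hg : ContDiff ℝ ∞ g) (x) :
    Eu (fun y => f y * g y) x = Eu f x * g x + f x * Eu g x := by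
  simp only [Eu, pd_mul _ hf hg, Finset.sum_mul, Finset.mul_sum, ← Finset.sum_add_distrib]
  exact Finset.sum_congr rfl fun i _ => by ring

theorem Eu_sum {f : Fin n → (Fin n → ℝ) → ℝ} (hf : ∀ i, ContDiff ℝ ∞ (f i)) (x) :
    Eu (fun y => ∑ i, f i y) x = ∑ i, Eu (f i) x := by
  simp only [Eu, pd_sum _ _ hf, Finset.mul_sum]
  exact Finset.sum_comm

theorem contr_smooth {f : Fin n → (Fin n → ℝ) → ℝ} (hf : ∀ i, ContDiff ℝ ∞ (f i)) :
    ContDiff ℝ ∞ (fun y : Fin n → ℝ => ∑ i, y i * f i y) :=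
  ContDiff.sum fun i _ => (contDiff_apply ℝ ℝ i).mul (hf i)

theorem Eu_contr {f : Fin n → (Fin n → ℝ) → ℝ} (hf : ∀ i, ContDiff ℝ ∞ (f i)) (x) :
    Eu (fun y => ∑ i, y i * f i y) x = ∑ i, x i * (Eu (f i) x + f i x) := by
  rw [Eu_sum (fun i => (contDiff_apply ℝ ℝ i).mul (hf i))]
  refine Finset.sum_congr rfl fun i _ => ?_
  rw [Eu_mul (contDiff_apply ℝ ℝ i) (hf i), Eu_coord]
  ring

theorem Eu_inj {f g h : (Fin n → ℝ) → ℝ} (hf : ContDiff ℝ ∞ f) (hg : ContDiff ℝ ∞ g)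
    (h1 : ∀ x, Eu f x + f x = h x) (h2 : ∀ x, Eu g x + g x = h x) (x) : f x = g x := by
  have := Eu_zero 0 ((hf.sub hg).differentiable (by simp)) (fun x => by
    rw [Eu_sub hf hg]
    have := h1 x
    have := h2 x
    push_cast
    linarith) x
  linarith

theorem Eu_zero' {f : (Fin n → ℝ) → ℝ} (hf : ContDiff ℝ ∞ f)
    (h1 : ∀ x, Eu f x = 0) (h0 : f 0 = 0) (x) : f x = 0 := by
  rw [Eu_const (hf.differentiable (by simp)) h1, h0]

section
variable {R : (Fin n → ℝ) → Fin n → Fin n → Matrix (Fin n) (Fin n) ℝ}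

theorem wOf_eq (μ a b : Fin n) (x) :
    ωOf R x μ a b = rI (fun y => ∑ ν, y ν * R y ν μ a b) x := by
  simp only [ωOf, rI, Matrix.of_apply]
  congr 1
  funext t
  simp only [smul_eq_mul, Finset.mul_sum, Pi.smul_apply, mul_assoc]

theorem wOf_smooth (hR : ∀ μ ν a b, ContDiff ℝ ∞ fun x => R x μ ν a b) (μ a b : Fin n) :
    ContDiff ℝ ∞ (fun x => ωOf R x μ a b) := by
  simp only [wOf_eq]
  exact rI_contDiff (contr_smooth fun ν => hR ν μ a b)

theorem wOf_Eu (hR : ∀ μ ν a b, ContDiff ℝ ∞ fun x => R x μ ν a b) (μ a b : Fin n) (x) :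
    Eu (fun x => ωOf R x μ a b) x + ωOf R x μ a b = ∑ ν, x ν * R x ν μ a b := by
  simp only [wOf_eq]
  exact Eu_rI (contr_smooth fun ν => hR ν μ a b) x

theorem eOf_eq (hR : ∀ μ ν a b, ContDiff ℝ ∞ fun x => R x μ ν a b) (a μ : Fin n) (x) :
    eOf R x a μ = (1 : Matrix (Fin n) (Fin n) ℝ) a μ + ∑ b, x b * ωOf R x μ a b
      - rI (fun y => ∑ b, y b * ∑ ν, y ν * R y ν μ a b) x := by
  have hc : ∀ μ ν a b, Continuous fun x => R x μ ν a b := fun μ ν a b => (hR μ ν a b).continuous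
  simp only [eOf, Matrix.of_apply, ωOf, rI]
  rw [add_sub_assoc]
  congr 1
  simp only [← intervalIntegral.integral_const_mul]
  rw [← intervalIntegral.integral_finsetSum, ← intervalIntegral.integral_sub]
  · congr 1
    funext t
    simp only [smul_eq_mul, Finset.mul_sum, Pi.smul_apply, ← Finset.sum_sub_distrib]
    refine Finset.sum_congr rfl fun b _ => Finset.sum_congr rfl fun ν _ => ?_
    ring
  · refine Continuous.intervalIntegrable ?_ _ _
    refine continuous_finsetSum _ fun b _ => continuous_const.mul (continuous_id.smul ?_)
    refine continuous_finsetSum _ fun ν _ => continuous_const.mul ?_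
    exact (hc ν μ a b).comp (by fun_prop)
  · refine Continuous.intervalIntegrable ?_ _ _
    refine continuous_finsetSum _ fun b _ => Continuous.mul (by fun_prop) ?_
    refine continuous_finsetSum _ fun ν _ => Continuous.mul (by fun_prop) ?_
    exact (hc ν μ a b).comp (by fun_prop)
  · intro b _
    refine Continuous.intervalIntegrable ?_ _ _
    refine continuous_const.mul (continuous_id.smul ?_)
    refine continuous_finsetSum _ fun ν _ => continuous_const.mul ?_
    exact (hc ν μ a b).comp (by fun_prop)

theorem eOf_aux (hR : ∀ μ ν a b, ContDiff ℝ ∞ fun x => R x μ ν a b) (a μ : Fin n) :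
    ContDiff ℝ ∞ (fun y : Fin n → ℝ => ∑ b, y b * ∑ ν, y ν * R y ν μ a b) :=
  contr_smooth fun b => contr_smooth fun ν => hR ν μ a b

theorem eOf_smooth (hR : ∀ μ ν a b, ContDiff ℝ ∞ fun x => R x μ ν a b) (a μ : Fin n) :
    ContDiff ℝ ∞ (fun x => eOf R x a μ) := by
  simp only [eOf_eq hR]
  exact (contDiff_const.add (contr_smooth fun b => wOf_smooth hR μ a b)).sub
    (rI_contDiff (eOf_aux hR a μ))

theorem eOf_Eu (hR : ∀ μ ν a b, ContDiff ℝ ∞ fun x => R x μ ν a b) (a μ : Fin n) (x) :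
    Eu (fun x => eOf R x a μ) x + eOf R x a μ
      = (1 : Matrix (Fin n) (Fin n) ℝ) a μ + ∑ b, x b * ωOf R x μ a b := by
  have h1 := contr_smooth fun b => wOf_smooth hR μ a b
  have h2 := rI_contDiff (eOf_aux hR a μ)
  simp only [eOf_eq hR]
  rw [Eu_sub (contDiff_const.add h1) h2, Eu_add contDiff_const h1, Eu_cst,
    Eu_contr (fun b => wOf_smooth hR μ a b)]
  simp only [wOf_Eu hR]
  linear_combination -(Eu_rI (eOf_aux hR a μ) x)

end

section
variable {w E : Fin n → (Fin n → ℝ) → Matrix (Fin n) (Fin n) ℝ}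

theorem contract_To (hE : ∀ μ, SM (E μ)) {Y : (Fin n → ℝ) → Matrix (Fin n) (Fin n) ℝ}
    (hY : ∀ y, ∑ μ, y μ • E μ y = Y y) (ν : Fin n) (x) :
    ∑ μ, x μ • To w E μ ν x = Er (E ν) x - (md ν Y x - E ν x)
      + (∑ μ, x μ • w μ x) * E ν x - w ν x * Y x := by
  have h1 := md_contract ν hE x
  simp only [hY] at h1
  rw [h1, ← hY x]
  simp only [To, smul_add, smul_sub, Finset.sum_add_distrib, Finset.sum_sub_distrib, Er,
    Finset.sum_mul, Finset.mul_sum, Matrix.smul_mul, Matrix.mul_smul]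
  abel

theorem contract_Om (hw : ∀ μ, SM (w μ)) (h0 : ∀ y, ∑ μ, y μ • w μ y = 0) (ν : Fin n) (x) :
    ∑ μ, x μ • Om w μ ν x = Er (w ν) x + w ν x := by
  have := contract_To (w := w) hw h0 ν x
  have z : md ν (fun _ => (0 : Matrix (Fin n) (Fin n) ℝ)) x = 0 := by
    ext i j; exact pd_const ν 0 x
  rw [h0, z] at this
  change ∑ μ, x μ • Om w μ ν x = _ at this
  rw [this]
  simp

variable {e : (Fin n → ℝ) → Matrix (Fin n) (Fin n) ℝ}

theorem SM_ecol (he : SM e) (ν : Fin n) : SM (ecol e ν) := fun a _ => he a ν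

theorem one_col (h1 : ∀ (x : Fin n → ℝ) a, ∑ μ, x μ * e x a μ = x a) (y) :
    ∑ μ, y μ • ecol e μ y = Xc y := by
  ext a j
  simp [Matrix.sum_apply, ecol, Xc, h1]

theorem md_Xc (ν : Fin n) (x) (a j : Fin n) :
    md ν Xc x a j = (1 : Matrix (Fin n) (Fin n) ℝ) a ν := pd_coord ν a x

theorem lemD1 (he : SM e) (h1 : ∀ (x : Fin n → ℝ) a, ∑ μ, x μ * e x a μ = x a)
    (hT : ∀ μ ν x, To w (ecol e) μ ν x = 0) (x) :
    Er e x + e x + (∑ μ, x μ • w μ x) * e x = 1 + Bm w x := by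
  ext a ν
  have h := contract_To (w := w) (SM_ecol he) (one_col h1) ν x
  simp only [hT, smul_zero, Finset.sum_const_zero] at h
  have h' := congrFun (congrFun h a) a
  simp only [Matrix.sub_apply, Matrix.add_apply, Matrix.zero_apply, md_Xc, Er_apply] at h'
  have e1 : ((∑ μ, x μ • w μ x) * ecol e ν x) a a = ((∑ μ, x μ • w μ x) * e x) a ν := rfl
  have e2 : (w ν x * Xc x) a a = Bm w x a ν := rfl
  have e3 : ecol e ν x a a = e x a ν := rfl
  have e4 : (fun y => ecol e ν y a a) = fun y => e y a ν := rfl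
  rw [e1, e2, e3, e4] at h'
  simp only [Matrix.add_apply, Er_apply]
  linarith

theorem lemD2 (he : SM e) (h2 : ∀ (x : Fin n → ℝ) μ, ∑ a, x a * e x a μ = x μ)
    (ha : ∀ μ x a b, w μ x a b = - w μ x b a)
    (hT : ∀ μ ν x, To w (ecol e) μ ν x = 0) (x) :
    (e x)ᵀ * (1 + Bm w x) = (1 + Bm w x)ᵀ * e x := by
  have hp : ∀ μ ν, e x μ ν + ∑ a, x a * pd μ (fun y => e y a ν) x
      = (1 : Matrix (Fin n) (Fin n) ℝ) ν μ := by
    intro μ ν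
    have h := pd_sum μ Finset.univ (fun a => (contDiff_apply ℝ ℝ a).mul (he a ν)) x
    have e1 : (fun y : Fin n → ℝ => ∑ a, y a * e y a ν) = fun y => y ν := by
      funext y; exact h2 y ν
    rw [e1, pd_coord] at h
    rw [h]
    have : ∀ a, pd μ (fun y => y a * e y a ν) x
        = (1 : Matrix (Fin n) (Fin n) ℝ) a μ * e x a ν + x a * pd μ (fun y => e y a ν) x := by
      intro a
      rw [pd_mul μ (contDiff_apply ℝ ℝ a) (he a ν), pd_coord]
    simp only [this, Finset.sum_add_distrib]
    simp [Matrix.one_apply]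
  have hb : ∀ μ ν, ∑ a, x a * (∑ b, w μ x a b * e x b ν) = - ((Bm w x)ᵀ * e x) μ ν := by
    intro μ ν
    simp only [Matrix.mul_apply, Matrix.transpose_apply, Bm, Matrix.of_apply, Finset.mul_sum,
      Finset.sum_mul]
    rw [Finset.sum_comm, ← Finset.sum_neg_distrib]
    refine Finset.sum_congr rfl fun b _ => ?_
    rw [← Finset.sum_neg_distrib]
    refine Finset.sum_congr rfl fun a _ => ?_
    rw [ha μ x a b]; ring
  ext μ ν
  have h : ∑ a, x a * To w (ecol e) μ ν x a a = 0 := by simp [hT]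
  have hexp : ∀ a, To w (ecol e) μ ν x a a = pd μ (fun y => e y a ν) x - pd ν (fun y => e y a μ) x
      + (∑ b, w μ x a b * e x b ν) - ∑ b, w ν x a b * e x b μ := fun a => rfl
  simp only [hexp, mul_add, mul_sub, Finset.sum_add_distrib, Finset.sum_sub_distrib, hb] at h
  have p1 := hp μ ν
  have p2 := hp ν μ
  have q : ((Bm w x)ᵀ * e x) ν μ = ((e x)ᵀ * Bm w x) μ ν := by
    simp only [Matrix.mul_apply, Matrix.transpose_apply, mul_comm]
  have r : (1 : Matrix (Fin n) (Fin n) ℝ) ν μ = (1 : Matrix (Fin n) (Fin n) ℝ) μ ν := by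
    simp [Matrix.one_apply, eq_comm]
  rw [mul_add, Matrix.transpose_add, add_mul]
  simp only [Matrix.add_apply, mul_one, Matrix.transpose_one, one_mul, Matrix.transpose_apply]
  rw [q] at h
  linarith

/-- condition three in matrix form -/
theorem three_iff (hu : ∀ x, IsUnit (e x)) :
    (∀ (x : Fin n → ℝ) a b,
        ∑ μ, (e x)⁻¹ μ a * ((∑ ν, x ν * pd ν (fun y => e y b μ) x) + e x b μ)
          = ∑ μ, (e x)⁻¹ μ b * ((∑ ν, x ν * pd ν (fun y => e y a μ) x) + e x a μ))
    ↔ ∀ x, (e x)ᵀ * (Er e x + e x) = (Er e x + e x)ᵀ * e x := by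
  have key : ∀ x a b, ∑ μ, (e x)⁻¹ μ a * ((∑ ν, x ν * pd ν (fun y => e y b μ) x) + e x b μ)
      = ((Er e x + e x) * (e x)⁻¹) b a := by
    intro x a b
    simp only [Matrix.mul_apply, Matrix.add_apply, Er_apply, Eu, mul_comm]
  simp only [key]
  have k2 : ∀ x, (∀ a b, ((Er e x + e x) * (e x)⁻¹) b a = ((Er e x + e x) * (e x)⁻¹) a b)
      ↔ (e x)ᵀ * (Er e x + e x) = (Er e x + e x)ᵀ * e x := by
    intro x
    have hd := (Matrix.isUnit_iff_isUnit_det _).1 (hu x)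
    have hdt : IsUnit ((e x)ᵀ).det := by rwa [Matrix.det_transpose]
    set N := Er e x + e x
    constructor
    · intro h
      have h' : (N * (e x)⁻¹)ᵀ = N * (e x)⁻¹ := by ext a b; exact h a b
      rw [Matrix.transpose_mul, Matrix.transpose_nonsing_inv] at h'
      calc (e x)ᵀ * N = (e x)ᵀ * (N * (e x)⁻¹ * e x) := by
            rw [Matrix.nonsing_inv_mul_cancel_right _ _ hd]
        _ = Nᵀ * e x := by
            rw [← h', ← Matrix.mul_assoc, ← Matrix.mul_assoc, Matrix.mul_nonsing_inv _ hdt, one_mul]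
    · intro h
      have h' : (N * (e x)⁻¹)ᵀ = N * (e x)⁻¹ := by
        rw [Matrix.transpose_mul, Matrix.transpose_nonsing_inv]
        calc ((e x)ᵀ)⁻¹ * Nᵀ = ((e x)ᵀ)⁻¹ * (Nᵀ * e x * (e x)⁻¹) := by
              rw [Matrix.mul_nonsing_inv_cancel_right _ _ hd]
          _ = N * (e x)⁻¹ := by
              rw [← h, ← Matrix.mul_assoc, ← Matrix.mul_assoc, Matrix.nonsing_inv_mul _ hdt, one_mul]
      intro a b
      exact congrFun (congrFun h' a) b
  exact forall_congr' k2

end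
end

section
variable {n : ℕ}

theorem viel_unique {e f : (Fin n → ℝ) → Matrix (Fin n) (Fin n) ℝ} (he : SM e) (hf : SM f)
    (ue : ∀ x, IsUnit (e x)) (uf : ∀ x, IsUnit (f x))
    (e1 : ∀ (x : Fin n → ℝ) a, ∑ μ, x μ * e x a μ = x a)
    (f1 : ∀ (x : Fin n → ℝ) a, ∑ μ, x μ * f x a μ = x a)
    (e3 : ∀ x, (e x)ᵀ * (Er e x + e x) = (Er e x + e x)ᵀ * e x)
    (f3 : ∀ x, (f x)ᵀ * (Er f x + f x) = (Er f x + f x)ᵀ * f x)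
    (hg : ∀ x, (e x)ᵀ * e x = (f x)ᵀ * f x) (x) : e x = f x := by
  have half : ∀ {h : (Fin n → ℝ) → Matrix (Fin n) (Fin n) ℝ}, SM h →
      (∀ x, (h x)ᵀ * (Er h x + h x) = (Er h x + h x)ᵀ * h x) → ∀ x,
      (2:ℝ) • ((h x)ᵀ * Er h x) = Er (fun y => (h y)ᵀ * h y) x := by
    intro h hh h3 x
    rw [Er_mul hh.transpose hh, Er_transpose, two_smul]
    congr 1
    have := h3 x
    rw [mul_add, Matrix.transpose_add, add_mul] at this
    exact add_right_cancel this
  have hgf : (fun y => (e y)ᵀ * e y) = fun y => (f y)ᵀ * f y := funext hg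
  have hE : ∀ x, (e x)ᵀ * Er e x = (f x)ᵀ * Er f x := by
    intro x
    have h : (2:ℝ) • ((e x)ᵀ * Er e x) = (2:ℝ) • ((f x)ᵀ * Er f x) := by
      rw [half he e3, half hf f3, hgf]
    exact smul_right_injective _ (two_ne_zero) h
  have de := fun x => (Matrix.isUnit_iff_isUnit_det _).1 (ue x)
  have df := fun x => (Matrix.isUnit_iff_isUnit_det _).1 (uf x)
  have hO : SM (fun y => f y * (e y)⁻¹) := hf.mul (he.inv ue)
  have hOe : ∀ y, f y * (e y)⁻¹ * e y = f y := fun y =>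
    Matrix.nonsing_inv_mul_cancel_right _ _ (de y)
  have hErO : ∀ x, Er (fun y => f y * (e y)⁻¹) x = 0 := by
    intro x
    have h1 := Er_mul hO he x
    simp only [hOe] at h1
    -- `fᵀ * Er f = fᵀ * ErO * e + fᵀ O Er e`
    have h2 : (f x)ᵀ * (f x * (e x)⁻¹) = (e x)ᵀ := by
      rw [← Matrix.mul_assoc, ← hg, Matrix.mul_nonsing_inv_cancel_right _ _ (de x)]
    have h3 : (f x)ᵀ * Er f x = (f x)ᵀ * (Er (fun y => f y * (e y)⁻¹) x * e x)
        + (e x)ᵀ * Er e x := by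
      rw [h1, mul_add, ← Matrix.mul_assoc _ (f x * (e x)⁻¹), h2]
    rw [← hE x] at h3
    have h4 := right_eq_add.1 h3
    have uft : IsUnit ((f x)ᵀ) := by
      rw [Matrix.isUnit_iff_isUnit_det, Matrix.det_transpose]; exact df x
    have h5 := (uft.mul_right_eq_zero).1 h4
    exact ((ue x).mul_left_eq_zero).1 h5
  have at0 : ∀ {h : (Fin n → ℝ) → Matrix (Fin n) (Fin n) ℝ}, SM h →
      (∀ (x : Fin n → ℝ) a, ∑ μ, x μ * h x a μ = x a) → h 0 = 1 := by
    intro h hh h1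
    ext a μ
    have h2 := pd_sum μ Finset.univ (fun k => (contDiff_apply ℝ ℝ k).mul (hh a k)) 0
    have e1 : (fun y : Fin n → ℝ => ∑ k, y k * h y a k) = fun y => y a := by
      funext y; exact h1 y a
    rw [e1, pd_coord] at h2
    rw [h2]
    have : ∀ k, pd μ (fun y => y k * h y a k) 0
        = (1 : Matrix (Fin n) (Fin n) ℝ) k μ * h 0 a k := by
      intro k
      rw [pd_mul μ (contDiff_apply ℝ ℝ k) (hh a k), pd_coord]
      simp
    simp only [this]
    simp [Matrix.one_apply]
  have hO1 : f x * (e x)⁻¹ = 1 := by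
    ext i j
    have h := Eu_const ((hO i j).differentiable (by simp)) (fun x => by
      rw [← Er_apply (M := fun y => f y * (e y)⁻¹), hErO]; rfl) x
    refine h.trans ?_
    simp only [at0 he e1, at0 hf f1]
    simp
  have := hOe x
  rw [hO1, one_mul] at this
  exact this

theorem conn_unique {e : (Fin n → ℝ) → Matrix (Fin n) (Fin n) ℝ}
    {w v : Fin n → (Fin n → ℝ) → Matrix (Fin n) (Fin n) ℝ}
    (ue : ∀ x, IsUnit (e x))
    (wa : ∀ μ x a b, w μ x a b = - w μ x b a) (va : ∀ μ x a b, v μ x a b = - v μ x b a)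
    (wT : ∀ μ ν x, To w (ecol e) μ ν x = 0) (vT : ∀ μ ν x, To v (ecol e) μ ν x = 0)
    (μ : Fin n) (x) : w μ x = v μ x := by
  have de := (Matrix.isUnit_iff_isUnit_det _).1 (ue x)
  have det : IsUnit ((e x)ᵀ).det := by rwa [Matrix.det_transpose]
  let P : Fin n → Matrix (Fin n) (Fin n) ℝ := fun a => Matrix.of fun μ b => w μ x a b - v μ x a b
  have hP : ∀ a, P a * e x = (e x)ᵀ * (P a)ᵀ := by
    intro a
    rw [← Matrix.transpose_mul]
    ext μ ν
    have h := congrFun (congrFun ((wT μ ν x).trans (vT μ ν x).symm) a) a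
    simp only [To, Matrix.sub_apply, Matrix.add_apply, Matrix.mul_apply, ecol, Matrix.of_apply] at h
    simp only [Matrix.transpose_apply, Matrix.mul_apply, P, Matrix.of_apply, sub_mul,
      Finset.sum_sub_distrib]
    linarith
  let Q : Fin n → Matrix (Fin n) (Fin n) ℝ := fun a => ((e x)ᵀ)⁻¹ * P a
  have hQ : ∀ a, (Q a)ᵀ = Q a := by
    intro a
    simp only [Q]
    rw [Matrix.transpose_mul, Matrix.transpose_nonsing_inv, Matrix.transpose_transpose]
    calc (P a)ᵀ * (e x)⁻¹ = ((e x)ᵀ)⁻¹ * ((e x)ᵀ * (P a)ᵀ) * (e x)⁻¹ := by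
          rw [Matrix.nonsing_inv_mul_cancel_left _ _ det]
      _ = _ := by
          rw [← hP, Matrix.mul_assoc, Matrix.mul_nonsing_inv_cancel_right _ _ de]
  have hQa : ∀ a b c, Q a c b = - Q b c a := by
    intro a b c
    simp only [Q, Matrix.mul_apply, ← Finset.sum_neg_distrib, P, Matrix.of_apply]
    refine Finset.sum_congr rfl fun k _ => ?_
    rw [wa k x a b, va k x a b]; ring
  have hQs : ∀ a b c, Q a b c = Q a c b := fun a b c => congrFun (congrFun (hQ a) c) b
  have hQ0 : ∀ a, Q a = 0 := by
    intro a
    ext b c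
    have t1 := hQa a c b
    have t2 := hQs c b a
    have t3 := hQa c b a
    have t4 := hQs b a c
    have t5 := hQa b a c
    have t6 := hQs a c b
    simp only [Matrix.zero_apply]
    linarith
  ext a b
  have : P a = 0 := by
    rw [← Matrix.mul_nonsing_inv_cancel_left _ (P a) det]
    change (e x)ᵀ * Q a = 0
    rw [hQ0, mul_zero]
  have h := congrFun (congrFun this μ) b
  simp only [P, Matrix.of_apply, Matrix.zero_apply] at h
  linarith

theorem conn_exists {e : (Fin n → ℝ) → Matrix (Fin n) (Fin n) ℝ} (he : SM e)
    (ue : ∀ x, IsUnit (e x)) :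
    ∃ w : Fin n → (Fin n → ℝ) → Matrix (Fin n) (Fin n) ℝ, (∀ μ, SM (w μ)) ∧
      (∀ μ x a b, w μ x a b = - w μ x b a) ∧ (∀ μ ν x, To w (ecol e) μ ν x = 0) := by
  let τ : Fin n → (Fin n → ℝ) → Matrix (Fin n) (Fin n) ℝ := fun a x => Matrix.of fun μ ν =>
    pd μ (fun y => e y a ν) x - pd ν (fun y => e y a μ) x
  have hτ : ∀ a, SM (τ a) := fun a μ ν => (pd_smooth μ (he a ν)).sub (pd_smooth ν (he a μ))
  have hτa : ∀ a x, (τ a x)ᵀ = - τ a x := by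
    intro a x; ext μ ν; simp [τ]
  let C : Fin n → (Fin n → ℝ) → Matrix (Fin n) (Fin n) ℝ := fun a x =>
    ((e x)⁻¹)ᵀ * τ a x * (e x)⁻¹
  have hC : ∀ a, SM (C a) := fun a => ((he.inv ue).transpose.mul (hτ a)).mul (he.inv ue)
  have hCa : ∀ a x b c, C a x b c = - C a x c b := by
    intro a x b c
    have : (C a x)ᵀ = - C a x := by
      simp only [C, Matrix.transpose_mul, hτa, Matrix.transpose_transpose]
      simp [Matrix.mul_assoc]
    exact congrFun (congrFun this c) b
  have hCτ : ∀ a x, (e x)ᵀ * C a x * e x = τ a x := by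
    intro a x
    have de := (Matrix.isUnit_iff_isUnit_det _).1 (ue x)
    have det : IsUnit ((e x)ᵀ).det := by rwa [Matrix.det_transpose]
    simp only [C]
    rw [Matrix.transpose_nonsing_inv, Matrix.mul_assoc, Matrix.nonsing_inv_mul_cancel_right _ _ de,
      Matrix.mul_nonsing_inv_cancel_left _ _ det]
  let W : (Fin n → ℝ) → Fin n → Fin n → Fin n → ℝ := fun x a b c =>
    (1/2) * (C a x b c + C b x c a - C c x a b)
  have hW : ∀ a b c, ContDiff ℝ ∞ fun x => W x a b c := fun a b c =>
    contDiff_const.mul (((hC a b c).add (hC b c a)).sub (hC c a b))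
  refine ⟨fun μ x => Matrix.of fun a b => ∑ c, W x a b c * e x c μ, ?_, ?_, ?_⟩
  · intro μ a b
    simp only [Matrix.of_apply]
    exact ContDiff.sum fun c _ => (hW a b c).mul (he c μ)
  · intro μ x a b
    simp only [Matrix.of_apply, ← Finset.sum_neg_distrib]
    refine Finset.sum_congr rfl fun c _ => ?_
    have t1 := hCa a x b c
    have t2 := hCa b x c a
    have t3 := hCa c x a b
    simp only [W]
    rw [t1, t2, t3]; ring
  · intro μ ν x
    ext a j
    let Wh : Matrix (Fin n) (Fin n) ℝ := Matrix.of fun c b => W x a b c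
    have h1 : C a x + Wh - Whᵀ = 0 := by
      ext b c
      have t1 := hCa a x b c
      have t2 := hCa b x c a
      have t3 := hCa c x a b
      simp only [Matrix.sub_apply, Matrix.add_apply, Matrix.transpose_apply, Wh, Matrix.of_apply, W,
        Matrix.zero_apply]
      linarith
    have h2 : τ a x + (e x)ᵀ * Wh * e x - ((e x)ᵀ * Wh * e x)ᵀ = 0 := by
      have e1 : ((e x)ᵀ * Wh * e x)ᵀ = (e x)ᵀ * Whᵀ * e x := by
        simp [Matrix.transpose_mul, Matrix.mul_assoc]
      rw [e1, ← hCτ, ← add_mul, ← sub_mul, ← mul_add, ← mul_sub, h1, mul_zero, zero_mul]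
    have h3 := congrFun (congrFun h2 μ) ν
    have h4 : ∀ μ ν, ((e x)ᵀ * Wh * e x) μ ν = ∑ b, (∑ c, W x a b c * e x c μ) * e x b ν := by
      intro μ ν
      simp only [Matrix.mul_apply, Matrix.transpose_apply, Wh, Matrix.of_apply, mul_comm]
    simp only [Matrix.sub_apply, Matrix.add_apply, Matrix.transpose_apply, h4,
      Matrix.zero_apply] at h3
    simp only [To, Matrix.sub_apply, Matrix.add_apply, Matrix.mul_apply, ecol, Matrix.of_apply, md,
      Matrix.zero_apply]
    exact h3

theorem curv_geom {R : (Fin n → ℝ) → Fin n → Fin n → Matrix (Fin n) (Fin n) ℝ}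
    (hR : R ∈ CurvatureSet n) :
    (∀ μ, SM (fun x => ωOf R x μ)) ∧ SM (eOf R) ∧
    (∀ μ x a b, ωOf R x μ a b = - ωOf R x μ b a) ∧
    (∀ x, ∑ μ, x μ • ωOf R x μ = 0) ∧
    (∀ (x : Fin n → ℝ) a, ∑ μ, x μ * eOf R x a μ = x a) ∧
    (∀ (x : Fin n → ℝ) μ, ∑ a, x a * eOf R x a μ = x μ) ∧
    (∀ μ ν x, To (fun μ x => ωOf R x μ) (ecol (eOf R)) μ ν x = 0) ∧
    (∀ μ ν x, Om (fun μ x => ωOf R x μ) μ ν x = R x μ ν) := by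
  obtain ⟨hs, ha, hb, hB1, hB2, hu⟩ := hR
  have hw : ∀ μ, SM (fun x => ωOf R x μ) := fun μ a b => wOf_smooth hs μ a b
  have he : SM (eOf R) := fun a μ => eOf_smooth hs a μ
  have hwa : ∀ μ x a b, ωOf R x μ a b = - ωOf R x μ b a := by
    intro μ x a b
    simp only [ωOf, Matrix.of_apply]
    rw [← intervalIntegral.integral_neg]
    congr 1
    funext t
    rw [← smul_neg, ← Finset.sum_neg_distrib]
    congr 1
    refine Finset.sum_congr rfl fun ν _ => ?_
    rw [hb _ ν μ a b]; ring
  have hw0s : ∀ a b x, ∑ μ, x μ * ωOf R x μ a b = 0 := by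
    intro a b
    refine Eu_zero' (contr_smooth fun μ => hw μ a b) (fun x => ?_) (by simp)
    rw [Eu_contr (fun μ => hw μ a b)]
    simp only [wOf_Eu hs]
    exact antisym_sum (Matrix.of fun μ ν => R x ν μ a b) (fun μ ν => ha x ν μ a b) x
  have hw0 : ∀ x, ∑ μ, x μ • ωOf R x μ = 0 := by
    intro x; ext a b
    simpa [Matrix.sum_apply] using hw0s a b x
  have h1 : ∀ (x : Fin n → ℝ) a, ∑ μ, x μ * eOf R x a μ = x a := by
    intro x a
    have := Eu_zero' (f := fun x => ∑ μ, x μ * eOf R x a μ - x a)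
      ((contr_smooth fun μ => he a μ).sub (contDiff_apply ℝ ℝ a)) (fun x => ?_) (by simp) x
    · linarith
    · rw [Eu_sub (contr_smooth fun μ => he a μ) (contDiff_apply ℝ ℝ a), Eu_contr (fun μ => he a μ),
        Eu_coord]
      simp only [eOf_Eu hs, mul_add, Finset.sum_add_distrib]
      have z : ∑ μ, x μ * ∑ b, x b * ωOf R x μ a b = 0 := by
        have : ∑ μ, x μ * ∑ b, x b * ωOf R x μ a b = ∑ b, x b * ∑ μ, x μ * ωOf R x μ a b := by
          simp only [Finset.mul_sum]
          rw [Finset.sum_comm]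
          refine Finset.sum_congr rfl fun b _ => Finset.sum_congr rfl fun μ _ => by ring
        rw [this]
        simp [hw0s]
      rw [z]
      simp [Matrix.one_apply]
  have h2 : ∀ (x : Fin n → ℝ) μ, ∑ a, x a * eOf R x a μ = x μ := by
    intro x μ
    have := Eu_zero' (f := fun x => ∑ a, x a * eOf R x a μ - x μ)
      ((contr_smooth fun a => he a μ).sub (contDiff_apply ℝ ℝ μ)) (fun x => ?_) (by simp) x
    · linarith
    · rw [Eu_sub (contr_smooth fun a => he a μ) (contDiff_apply ℝ ℝ μ), Eu_contr (fun a => he a μ),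
        Eu_coord]
      simp only [eOf_Eu hs, mul_add, Finset.sum_add_distrib]
      rw [antisym_sum (ωOf R x μ) (hwa μ x)]
      simp [Matrix.one_apply]
  have hRs : ∀ μ ν, SM (fun x => R x μ ν) := hs
  have hRx : ∀ ν x, ∑ μ, x μ • R x μ ν = Er (fun x => ωOf R x ν) x + ωOf R x ν := by
    intro ν x; ext a b
    rw [Matrix.add_apply, Er_apply, wOf_Eu hs]
    simp [Matrix.sum_apply]
  have hOm : ∀ μ ν x, Om (fun μ x => ωOf R x μ) μ ν x = R x μ ν := by
    intro μ ν x
    rw [← sub_eq_zero]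
    refine radial_zero (F := fun μ ν x => Om (fun μ x => ωOf R x μ) μ ν x - R x μ ν)
      (w := fun μ x => ωOf R x μ) (w' := fun μ x => ωOf R x μ)
      (fun μ ν => (SM_Om hw μ ν).sub (hRs μ ν)) ?_ hw0 hw0 ?_ ?_ μ ν x
    · intro μ ν x
      have : R x μ ν = - R x ν μ := by ext a b; exact ha x μ ν a b
      rw [this]
      unfold Om
      abel
    · intro ν x
      simp only [smul_sub, Finset.sum_sub_distrib]
      rw [contract_Om hw hw0, hRx, sub_self]
    · intro μ ν ρ x
      have b2 := bianchi2 hw μ ν ρ x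
      have r2 : md μ (fun x => R x ν ρ) x + md ν (fun x => R x ρ μ) x + md ρ (fun x => R x μ ν) x
          + (ωOf R x μ * R x ν ρ + ωOf R x ν * R x ρ μ + ωOf R x ρ * R x μ ν)
          - (R x ν ρ * ωOf R x μ + R x ρ μ * ωOf R x ν + R x μ ν * ωOf R x ρ) = 0 := by
        ext a b
        have := hB2 x μ ν ρ a b
        simp only [Matrix.sub_apply, Matrix.add_apply, Matrix.mul_apply, md, Matrix.of_apply,
          Matrix.zero_apply]
        simp only [Finset.sum_add_distrib, Finset.sum_sub_distrib] at this
        linarith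
      rw [md_sub μ (SM_Om hw ν ρ) (hRs ν ρ), md_sub ν (SM_Om hw ρ μ) (hRs ρ μ),
        md_sub ρ (SM_Om hw μ ν) (hRs μ ν)]
      simp only [mul_sub, sub_mul]
      rw [← sub_eq_zero.2 (b2.trans r2.symm)]
      abel
  have hT : ∀ μ ν x, To (fun μ x => ωOf R x μ) (ecol (eOf R)) μ ν x = 0 := by
    refine radial_zero (w := fun μ x => ωOf R x μ) (w' := fun _ _ => 0)
      (fun μ ν => SM_To hw (SM_ecol he) μ ν) ?_ hw0 (by simp) ?_ ?_
    · intro μ ν x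
      unfold To
      abel
    · intro ν x
      rw [contract_To (SM_ecol he) (one_col h1), hw0]
      ext a j
      have k := eOf_Eu hs a ν x
      have e2 : (ωOf R x ν * Xc x) a j = ∑ b, x b * ωOf R x ν a b := by
        simp only [Matrix.mul_apply, Xc, Matrix.of_apply, mul_comm]
      have e4 : (fun y => ecol (eOf R) ν y a j) = fun y => eOf R y a ν := rfl
      simp only [zero_mul, Matrix.sub_apply, Matrix.add_apply, md_Xc, Er_apply, e2, e4,
        Matrix.zero_apply]
      simp only [ecol, Matrix.of_apply]
      linarith
    · intro μ ν ρ x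
      rw [bianchi1 hw (SM_ecol he)]
      simp only [hOm, mul_zero, add_zero, sub_zero]
      ext a j
      have := hB1 x μ ν ρ a
      simp only [Finset.sum_add_distrib] at this
      simp only [Matrix.add_apply, Matrix.mul_apply, ecol, Matrix.of_apply, Matrix.zero_apply]
      exact this
  exact ⟨hw, he, hwa, hw0, h1, h2, hT, hOm⟩

theorem curv_three {R : (Fin n → ℝ) → Fin n → Fin n → Matrix (Fin n) (Fin n) ℝ}
    (hR : R ∈ CurvatureSet n) (x) :
    (eOf R x)ᵀ * (Er (eOf R) x + eOf R x) = (Er (eOf R) x + eOf R x)ᵀ * eOf R x := by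
  obtain ⟨hw, he, hwa, hw0, h1, h2, hT, hOm⟩ := curv_geom hR
  have d1 := lemD1 he h1 hT x
  have d2 := lemD2 he h2 hwa hT x
  rw [hw0, zero_mul, add_zero] at d1
  rw [d1, d2]

theorem metOf_eq (R : (Fin n → ℝ) → Fin n → Fin n → Matrix (Fin n) (Fin n) ℝ) (x) :
    metOf R x = (eOf R x)ᵀ * eOf R x := by
  ext μ ν
  simp [metOf, Matrix.mul_apply]

theorem maps_to : Set.MapsTo (metOf (n := n)) (CurvatureSet n) (NormalMetricSet n) := by
  intro R hR
  have h3 := curv_three hR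
  obtain ⟨hw, he, hwa, hw0, h1, h2, hT, hOm⟩ := curv_geom hR
  have hu : ∀ x, IsUnit (eOf R x) := hR.2.2.2.2.2
  refine ⟨?_, ?_, ?_, ?_, eOf R, he, hu, h1, h2, (three_iff hu).2 h3, fun x μ ν => rfl⟩
  · intro μ ν
    simp only [metOf, Matrix.of_apply]
    exact ContDiff.sum fun a _ => (he a μ).mul (he a ν)
  · intro x μ ν
    simp only [metOf, Matrix.of_apply, mul_comm]
  · intro x
    rw [metOf_eq, ← Matrix.conjTranspose_eq_transpose_of_trivial]
    exact Matrix.PosDef.conjTranspose_mul_self _ (Matrix.mulVec_injective_of_isUnit (hu x))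
  · intro x ν
    simp only [metOf, Matrix.of_apply, Finset.mul_sum]
    rw [Finset.sum_comm]
    have : ∀ a, ∑ μ, x μ * (eOf R x a μ * eOf R x a ν) = x a * eOf R x a ν := by
      intro a
      simp only [← mul_assoc, ← Finset.sum_mul, h1]
    simp only [this, h2]

theorem inj_on : Set.InjOn (metOf (n := n)) (CurvatureSet n) := by
  intro R hR S hS hRS
  have r3 := curv_three hR
  have s3 := curv_three hS
  obtain ⟨rw', re, rwa', rw0, r1, r2, rT, rOm⟩ := curv_geom hR
  obtain ⟨sw, se, swa, sw0, s1, s2, sT, sOm⟩ := curv_geom hS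
  have ru : ∀ x, IsUnit (eOf R x) := hR.2.2.2.2.2
  have su : ∀ x, IsUnit (eOf S x) := hS.2.2.2.2.2
  have hee : eOf R = eOf S := by
    funext x
    refine viel_unique re se ru su r1 s1 r3 s3 (fun x => ?_) x
    rw [← metOf_eq, ← metOf_eq, hRS]
  rw [← hee] at sT
  have hww : (fun μ x => ωOf R x μ) = (fun μ x => ωOf S x μ) := by
    funext μ x
    exact conn_unique ru rwa' swa rT sT μ x
  funext x μ ν
  rw [← rOm, ← sOm, hww]

theorem surj_on : Set.SurjOn (metOf (n := n)) (CurvatureSet n) (NormalMetricSet n) := by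
  rintro g ⟨-, -, -, -, e, he', hu, h1, h2, h3, hg⟩
  have he : SM e := he'
  rw [three_iff hu] at h3
  obtain ⟨w, hw, hwa, hT⟩ := conn_exists he hu
  have hwt : ∀ μ x, (w μ x)ᵀ = - w μ x := by
    intro μ x; ext a b; exact hwa μ x b a
  have hw0 : ∀ x, ∑ μ, x μ • w μ x = 0 := by
    intro x
    have d1 := lemD1 he h1 hT x
    have d2 := lemD2 he h2 hwa hT x
    have lt : (∑ μ, x μ • w μ x)ᵀ = - ∑ μ, x μ • w μ x := by
      simp [Matrix.transpose_sum, hwt]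
    rw [← d1, mul_add, Matrix.transpose_add, add_mul, h3 x] at d2
    have d3 := add_left_cancel d2
    rw [Matrix.transpose_mul, lt] at d3
    have d4 : (2:ℝ) • ((e x)ᵀ * (∑ μ, x μ • w μ x) * e x) = 0 := by
      rw [two_smul]
      nth_rewrite 1 [Matrix.mul_assoc, d3]
      simp
    have d5 := (smul_eq_zero.1 d4).resolve_left two_ne_zero
    have ut : IsUnit ((e x)ᵀ) := by
      rw [Matrix.isUnit_iff_isUnit_det, Matrix.det_transpose, ← Matrix.isUnit_iff_isUnit_det]
      exact hu x
    exact (ut.mul_right_eq_zero).1 (((hu x).mul_left_eq_zero).1 d5)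
  set R : (Fin n → ℝ) → Fin n → Fin n → Matrix (Fin n) (Fin n) ℝ := fun x μ ν => Om w μ ν x with hRdef
  have hs : ∀ μ ν a b, ContDiff ℝ ∞ fun x => R x μ ν a b := fun μ ν => SM_Om hw μ ν
  have hwO : ∀ x μ, ωOf R x μ = w μ x := by
    intro x μ
    ext a b
    refine Eu_inj (wOf_smooth hs μ a b) (hw μ a b) (wOf_Eu hs μ a b) (fun x => ?_) x
    have := congrFun (congrFun (contract_Om hw hw0 μ x) a) b
    rw [Matrix.add_apply, Er_apply] at this
    rw [← this]
    simp [Matrix.sum_apply, R]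
  have heO : eOf R = e := by
    funext x
    ext a μ
    refine Eu_inj (eOf_smooth hs a μ) (he a μ) (eOf_Eu hs a μ) (fun x => ?_) x
    have d1 := congrFun (congrFun (lemD1 he h1 hT x) a) μ
    rw [hw0, zero_mul, add_zero, Matrix.add_apply, Matrix.add_apply, Er_apply] at d1
    rw [d1]
    simp only [Bm, Matrix.of_apply, hwO, mul_comm]
  refine ⟨R, ⟨hs, ?_, ?_, ?_, ?_, ?_⟩, ?_⟩
  · intro x μ ν a b
    have : Om w μ ν x = - Om w ν μ x := by unfold Om; abel
    exact congrFun (congrFun this a) b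
  · intro x μ ν a b
    have hmt : ∀ μ ν, (md μ (w ν) x)ᵀ = - md μ (w ν) x := by
      intro μ ν
      ext a b
      simp only [md, Matrix.transpose_apply, Matrix.of_apply, Matrix.neg_apply]
      have : (fun y => w ν y b a) = fun y => - w ν y a b := by
        funext y; exact hwa ν y b a
      rw [this]
      simp [pd, fderiv_fun_neg]
    have : (Om w μ ν x)ᵀ = - Om w μ ν x := by
      simp only [Om, Matrix.transpose_sub, Matrix.transpose_add, Matrix.transpose_mul, hwt, hmt]
      noncomm_ring
    exact congrFun (congrFun this b) a
  · intro x μ ν ρ a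
    have b1 := bianchi1 hw (SM_ecol he) μ ν ρ x
    have z : ∀ α : Fin n, md α (fun _ => (0 : Matrix (Fin n) (Fin n) ℝ)) x = 0 := by
      intro α; ext i j; exact pd_const α 0 x
    have hT' : ∀ μ ν, To w (ecol e) μ ν = fun _ => 0 := fun μ ν => funext (hT μ ν)
    simp only [hT', z, mul_zero, add_zero] at b1
    have := congrFun (congrFun b1 a) a
    simp only [Matrix.add_apply, Matrix.mul_apply, ecol, Matrix.of_apply, Matrix.zero_apply] at this
    rw [heO]
    simp only [Finset.sum_add_distrib]
    exact this.symm
  · intro x μ ν ρ a b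
    have b2 := congrFun (congrFun (bianchi2 hw μ ν ρ x) a) b
    simp only [Matrix.sub_apply, Matrix.add_apply, Matrix.mul_apply, md, Matrix.of_apply,
      Matrix.zero_apply] at b2
    simp only [hwO, Finset.sum_add_distrib, Finset.sum_sub_distrib]
    simp only [R]
    linarith
  · intro x
    rw [heO]; exact hu x
  · funext x
    ext μ ν
    rw [hg]
    simp only [metOf, Matrix.of_apply, heO]

end

/-- main theorem: the map `R ↦ g`, `g_{μν} = ∑_a e^a_μ e^a_ν` with
`e^a_μ(x) = δ^a_μ + ∫₀¹ t(1−t) ∑_{b,ρ} x^b x^ρ R^a_{bρμ}(tx) dt`, is a bijection from the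
set of smooth antisymmetric curvatures satisfying the 1st and 2nd Bianchi identities for
curvature (with pointwise-invertible associated vielbein) onto the set of metrics in
normal coordinates arising from vielbeins satisfying conditions (one)–(three). -/
theorem curvature_metric_bijection {n : ℕ} (hn : 1 ≤ n) :
    Set.BijOn (metOf (n := n)) (CurvatureSet n) (NormalMetricSet n) := by
  exact ⟨maps_to, inj_on, surj_on⟩
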